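/- arXiv:1310.1303 — 2 statements merged into one kernel-verified Lean document; each statement's English description precedes it below -/
import Mathlib

section
/- Let p > 1 be an integer, I = [0,1] if p is even and I = [-1,1] if p is odd, and M = (M_n) an increasing sequence of reals with M_0 = 1. Suppose f : I → ℝ is smooth and F(ξ) := f(ξ^p) satisfies |F^{(n)}(ξ)| ≤ C·R^n·n!·M_n on I for some constants C, R > 0. Then f satisfies |f^{(n)}(x)| ≤ C'·R'^n·n!·M_{pn} on I for some constants C', R' > 0. -/
/-!
Write `Q_k h = h^(k) / k!` for the `k`-th Taylor coefficient of `h` at a varying point. By Leibniz'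
rule, `(k + 1)! Q_{k+1} (x h) = x u' + (k + 1) u` with `u = h^(k)`, and at a maximum of `u` on a
segment issuing from the origin `x u' ≥ 0`. Hence a bound on `Q_{k+1} (x h)` is also a bound on
`Q_k h`: division by `x` does not increase Taylor coefficients.

Let `F x = f (x ^ p)`. Then `F' x = p x ^ (p - 1) f' (x ^ p)`, so dividing by `x` another `p - 1`
times turns a bound `a` on `Q_{p (n + 1)} F` into the bound `(n + 1) a` on `Q_{p n}` of
`x ↦ f' (x ^ p)`. Iterating, a bound on `Q_{p n} F` is a bound on `Q_n f`.
-/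

open Set
open scoped Nat ContDiff

section Leibniz

variable {𝕜 E : Type*} [NontriviallyNormedField 𝕜] [NormedAddCommGroup E] [NormedSpace 𝕜 E]
  {s t : Set 𝕜} {x : 𝕜}

theorem iteratedDerivWithin_succ_id_smul {h : 𝕜 → E} {k : ℕ} (hh : ContDiffWithinAt 𝕜 (k + 1) h s x)
    (hs : UniqueDiffOn 𝕜 s) (hx : x ∈ s) :
    iteratedDerivWithin (k + 1) (fun y => y • h y) s x =
      x • iteratedDerivWithin (k + 1) h s x + (k + 1 : 𝕜) • iteratedDerivWithin k h s x := by
  have hid (i : ℕ) : iteratedDerivWithin i id s x = Nat.descFactorial 1 i * x ^ (1 - i) := by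
    simpa [Function.id_def] using iteratedDerivWithin_pow hx hs 1 i
  refine (iteratedDerivWithin_smul hx hs contDiffWithinAt_id (mod_cast hh)).trans ?_
  rw [Finset.sum_range_succ', Finset.sum_range_succ', Finset.sum_eq_zero fun i _ => ?_]
  · simp only [hid]
    simp [add_comm, ← Nat.cast_smul_eq_nsmul 𝕜]
  · simp [hid]

theorem derivWithin_comp_pow_succ {f : 𝕜 → E} {q : ℕ}
    (hf : DifferentiableWithinAt 𝕜 f t (x ^ (q + 1))) (hst : MapsTo (· ^ (q + 1)) s t)
    (hs : UniqueDiffWithinAt 𝕜 s x) :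
    derivWithin (fun y => f (y ^ (q + 1))) s x =
      (q + 1 : 𝕜) • x ^ q • derivWithin f t (x ^ (q + 1)) := by
  have hpow : HasDerivWithinAt (· ^ (q + 1)) ((q + 1 : 𝕜) * x ^ q) s x := by
    simpa using hasDerivWithinAt_pow (q + 1) x
  exact ((hf.hasDerivWithinAt.scomp x hpow hst).derivWithin hs).trans (mul_smul _ _ _)

end Leibniz

section MaximumPrinciple

variable {E : Type*} [NormedAddCommGroup E] [NormedSpace ℝ E] {s : Set ℝ} {c A x : ℝ}

theorem le_div_of_mul_deriv_add_mul_le (hs : StarConvex ℝ 0 s) {u u' : ℝ → ℝ}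
    (hu : ∀ y ∈ s, HasDerivWithinAt u (u' y) s y) (hc : 0 < c)
    (hA : ∀ y ∈ s, y * u' y + c * u y ≤ A) (hx : x ∈ s) : u x ≤ A / c := by
  have hsub : segment ℝ 0 x ⊆ s := hs.segment_subset hx
  have hu_seg (y) (hy : y ∈ segment ℝ 0 x) : HasDerivWithinAt u (u' y) (segment ℝ 0 x) y :=
    (hu y (hsub hy)).mono hsub
  have hcompact : IsCompact (segment ℝ 0 x) := segment_eq_uIcc (0 : ℝ) x ▸ isCompact_uIcc
  obtain ⟨z, hz, hmax⟩ := hcompact.exists_isMaxOn ⟨0, left_mem_segment ℝ 0 x⟩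
    fun y hy => (hu_seg y hy).continuousWithinAt
  have hinward : -z ∈ posTangentConeAt (segment ℝ 0 x) z := by
    apply mem_posTangentConeAt_of_segment_subset
    rw [add_neg_cancel]
    exact (convex_segment 0 x).segment_subset hz (left_mem_segment ℝ 0 x)
  have hz_deriv : 0 ≤ z * u' z := by
    simpa using hmax.localize.hasFDerivWithinAt_nonpos (hu_seg z hz).hasFDerivWithinAt hinward
  have hxz : u x ≤ u z := hmax (right_mem_segment ℝ 0 x)
  rw [le_div_iff₀ hc]
  nlinarith [hA z (hsub hz)]

theorem norm_le_div_of_norm_smul_deriv_add_smul_le (hs : StarConvex ℝ 0 s) {u u' : ℝ → E}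
    (hu : ∀ y ∈ s, HasDerivWithinAt u (u' y) s y) (hc : 0 < c)
    (hA : ∀ y ∈ s, ‖y • u' y + c • u y‖ ≤ A) (hx : x ∈ s) : ‖u x‖ ≤ A / c := by
  obtain ⟨g, hg, hgx⟩ := exists_dual_vector'' ℝ (u x)
  have hgA (y) (hy : y ∈ s) : y * g (u' y) + c * g (u y) ≤ A := calc
    y * g (u' y) + c * g (u y) = g (y • u' y + c • u y) := by simp
    _ ≤ ‖g (y • u' y + c • u y)‖ := Real.le_norm_self _
    _ ≤ 1 * ‖y • u' y + c • u y‖ := g.le_of_opNorm_le hg _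
    _ ≤ A := by simpa using hA y hy
  have hgu (y) (hy : y ∈ s) : HasDerivWithinAt (g ∘ u) (g (u' y)) s y :=
    g.hasFDerivAt.comp_hasDerivWithinAt y (hu y hy)
  calc ‖u x‖ = g (u x) := by simpa using hgx.symm
    _ ≤ A / c := le_div_of_mul_deriv_add_mul_le hs hgu hc hgA hx

end MaximumPrinciple

section TaylorCoefficients

variable {E : Type*} [NormedAddCommGroup E] [NormedSpace ℝ E] {s t : Set ℝ} {a : ℝ}

theorem norm_iteratedDerivWithin_le_of_id_smul (hs : StarConvex ℝ 0 s) (hsu : UniqueDiffOn ℝ s)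
    {h : ℝ → E} {k : ℕ} (hh : ContDiffOn ℝ (k + 1) h s)
    (ha : ∀ x ∈ s, ‖iteratedDerivWithin (k + 1) (fun y => y • h y) s x‖ ≤ (k + 1)! * a) :
    ∀ x ∈ s, ‖iteratedDerivWithin k h s x‖ ≤ k ! * a := by
  have hderiv (y) (hy : y ∈ s) : HasDerivWithinAt (iteratedDerivWithin k h s)
      (iteratedDerivWithin (k + 1) h s y) s y := by
    rw [iteratedDerivWithin_succ]
    exact (hh.differentiableOn_iteratedDerivWithin
      (mod_cast k.lt_succ_self) hsu y hy).hasDerivWithinAt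
  intro x hx
  calc ‖iteratedDerivWithin k h s x‖ ≤ (k + 1)! * a / (k + 1) :=
        norm_le_div_of_norm_smul_deriv_add_smul_le hs hderiv k.cast_add_one_pos
          (fun y hy => iteratedDerivWithin_succ_id_smul (hh y hy) hsu hy ▸ ha y hy) hx
    _ = k ! * a := by
        rw [Nat.factorial_succ]
        push_cast
        field_simp

theorem norm_iteratedDerivWithin_le_of_pow_smul (hs : StarConvex ℝ 0 s) (hsu : UniqueDiffOn ℝ s)
    {h : ℝ → E} {k m : ℕ} (hh : ContDiffOn ℝ (k + m) h s)
    (ha : ∀ x ∈ s, ‖iteratedDerivWithin (k + m) (fun y => y ^ m • h y) s x‖ ≤ (k + m)! * a) :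
    ∀ x ∈ s, ‖iteratedDerivWithin k h s x‖ ≤ k ! * a := by
  induction m with
  | zero => simpa using ha
  | succ m ih =>
    have hpow : ContDiffOn ℝ ((k + m : ℕ) + 1) (fun y => y ^ m • h y) s :=
      (contDiff_id.pow m).contDiffOn.smul (mod_cast hh)
    refine ih (hh.of_le (by gcongr; simp)) (norm_iteratedDerivWithin_le_of_id_smul hs hsu hpow ?_)
    intro x hx
    simpa only [smul_smul, ← pow_succ', ← add_assoc] using ha x hx

theorem norm_iteratedDerivWithin_derivWithin_comp_pow_le (hs : StarConvex ℝ 0 s)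
    (hsu : UniqueDiffOn ℝ s) (htu : UniqueDiffOn ℝ t) {p : ℕ} (hp : p ≠ 0)
    (hst : MapsTo (· ^ p) s t) {f : ℝ → E} {n : ℕ} (hf : ContDiffOn ℝ (p * (n + 1) : ℕ) f t)
    (ha : ∀ x ∈ s, ‖iteratedDerivWithin (p * (n + 1)) (fun y => f (y ^ p)) s x‖ ≤
      (p * (n + 1))! * a) :
    ∀ x ∈ s, ‖iteratedDerivWithin (p * n) (fun y => derivWithin f t (y ^ p)) s x‖ ≤
      (p * n)! * ((n + 1) * a) := by
  obtain ⟨q, rfl⟩ := Nat.exists_eq_add_one_of_ne_zero hp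
  have horder : (q + 1) * (n + 1) = (q + 1) * n + q + 1 := by ring
  rw [horder] at hf ha
  have hq : (0 : ℝ) < q + 1 := q.cast_add_one_pos
  have hf' : ContDiffOn ℝ ((q + 1) * n + q : ℕ) (derivWithin f t) t :=
    hf.derivWithin htu (by norm_cast)
  refine norm_iteratedDerivWithin_le_of_pow_smul hs hsu (m := q)
    (mod_cast hf'.comp (contDiff_id.pow (q + 1)).contDiffOn hst) fun x hx => ?_
  have hderiv : EqOn (derivWithin (fun y => f (y ^ (q + 1))) s)
      (fun y => (q + 1 : ℝ) • y ^ q • derivWithin f t (y ^ (q + 1))) s := fun y hy =>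
    derivWithin_comp_pow_succ (hf.differentiableOn (by simp) _ (hst hy)) hst (hsu y hy)
  have hbound := ha x hx
  rw [iteratedDerivWithin_succ', iteratedDerivWithin_congr hderiv hx,
    iteratedDerivWithin_fun_const_smul_field, norm_smul, Real.norm_of_nonneg hq.le] at hbound
  refine le_of_mul_le_mul_left (hbound.trans_eq ?_) hq
  rw [Nat.factorial_succ]
  push_cast
  ring

theorem norm_iteratedDerivWithin_pow_le_of_comp_pow (hs : StarConvex ℝ 0 s)
    (hsu : UniqueDiffOn ℝ s) (htu : UniqueDiffOn ℝ t) {p : ℕ} (hp : p ≠ 0)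
    (hst : MapsTo (· ^ p) s t) {f : ℝ → E} {n : ℕ} (hf : ContDiffOn ℝ (p * n : ℕ) f t)
    (ha : ∀ x ∈ s, ‖iteratedDerivWithin (p * n) (fun y => f (y ^ p)) s x‖ ≤ (p * n)! * a) :
    ∀ x ∈ s, ‖iteratedDerivWithin n f t (x ^ p)‖ ≤ n ! * a := by
  induction n generalizing f a with
  | zero => simpa using ha
  | succ n ih =>
    intro x hx
    have hf' : ContDiffOn ℝ (p * n : ℕ) (derivWithin f t) t :=
      hf.derivWithin htu (by norm_cast; rw [mul_add_one]; omega)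
    have ha' := norm_iteratedDerivWithin_derivWithin_comp_pow_le hs hsu htu hp hst hf ha
    calc ‖iteratedDerivWithin (n + 1) f t (x ^ p)‖
        = ‖iteratedDerivWithin n (derivWithin f t) t (x ^ p)‖ := by rw [iteratedDerivWithin_succ']
      _ ≤ n ! * ((n + 1) * a) := ih hf' ha' x hx
      _ = (n + 1)! * a := by
          rw [Nat.factorial_succ]
          push_cast
          ring

end TaylorCoefficients

theorem image_pow_Icc_of_nonneg {a b : ℝ} (ha : 0 ≤ a) (hab : a ≤ b) (p : ℕ) :
    (· ^ p) '' Icc a b = Icc (a ^ p) (b ^ p) :=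
  (continuous_pow p).continuousOn.image_Icc_of_monotoneOn hab
    ((pow_left_monotoneOn (n := p)).mono fun _ hx => ha.trans hx.1)

theorem image_pow_Icc_of_odd {p : ℕ} (hp : Odd p) {a b : ℝ} (hab : a ≤ b) :
    (· ^ p) '' Icc a b = Icc (a ^ p) (b ^ p) :=
  (continuous_pow p).continuousOn.image_Icc_of_monotoneOn hab
    (hp.strictMono_pow.monotone.monotoneOn _)

theorem exists_nonpos_ite_even_eq_Icc_image_pow {p : ℕ} (hp : p ≠ 0) :
    ∃ a : ℝ, a ≤ 0 ∧ (if Even p then Icc (0 : ℝ) 1 else Icc (-1) 1) = Icc a 1 ∧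
      (· ^ p) '' Icc a 1 = Icc a 1 := by
  rcases p.even_or_odd with heven | hodd
  · exact ⟨0, le_rfl, if_pos heven, by
      simpa [hp] using image_pow_Icc_of_nonneg le_rfl zero_le_one p⟩
  · exact ⟨-1, by norm_num, if_neg (Nat.not_even_iff_odd.2 hodd), by
      simpa [hodd.neg_one_pow] using image_pow_Icc_of_odd hodd (by norm_num : (-1 : ℝ) ≤ 1)⟩

theorem power_substitution_general {E : Type*} [NormedAddCommGroup E] [NormedSpace ℝ E]
    {p : ℕ} (hp : p ≠ 0) {s t : Set ℝ} (hs : StarConvex ℝ 0 s) (hsu : UniqueDiffOn ℝ s)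
    (htu : UniqueDiffOn ℝ t) (hst : (· ^ p) '' s = t) {M : ℕ → ℝ} {f : ℝ → E}
    (hf : ContDiffOn ℝ ∞ f t) {C R : ℝ}
    (hF : ∀ n : ℕ, ∀ ξ ∈ s,
      ‖iteratedDerivWithin n (fun ξ => f (ξ ^ p)) s ξ‖ ≤ C * R ^ n * n ! * M n) :
    ∀ n : ℕ, ∀ x ∈ t, ‖iteratedDerivWithin n f t x‖ ≤ C * (R ^ p) ^ n * n ! * M (p * n) := by
  subst hst
  rintro n _ ⟨ξ, hξ, rfl⟩
  have ha (y) (hy : y ∈ s) : ‖iteratedDerivWithin (p * n) (fun y => f (y ^ p)) s y‖ ≤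
      (p * n)! * (C * R ^ (p * n) * M (p * n)) :=
    (hF (p * n) y hy).trans_eq (by ring)
  calc ‖iteratedDerivWithin n f ((· ^ p) '' s) (ξ ^ p)‖ ≤ n ! * (C * R ^ (p * n) * M (p * n)) :=
        norm_iteratedDerivWithin_pow_le_of_comp_pow hs hsu htu hp (mapsTo_image _ s)
          (hf.of_le (mod_cast le_top)) ha ξ hξ
    _ = C * (R ^ p) ^ n * n ! * M (p * n) := by
        rw [← pow_mul]
        ring

theorem power_substitution (p : ℕ) (hp : 1 < p)
    (I : Set ℝ) (hI : I = if Even p then Set.Icc (0 : ℝ) 1 else Set.Icc (-1 : ℝ) 1)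
    (M : ℕ → ℝ) (hM0 : M 0 = 1) (hMmono : Monotone M)
    (f : ℝ → ℝ) (hf : ContDiffOn ℝ (⊤ : ℕ∞) f I)
    (C R : ℝ) (hC : 0 < C) (hR : 0 < R)
    (hF : ∀ n : ℕ, ∀ ξ ∈ I,
        |iteratedDerivWithin n (fun ξ => f (ξ ^ p)) I ξ| ≤ C * R ^ n * n.factorial * M n) :
    ∃ C' R' : ℝ, 0 < C' ∧ 0 < R' ∧ ∀ n : ℕ, ∀ x ∈ I,
        |iteratedDerivWithin n f I x| ≤ C' * R' ^ n * n.factorial * M (p * n) := by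
  have hp0 : p ≠ 0 := by omega
  obtain ⟨a, ha, hIa, himage⟩ := exists_nonpos_ite_even_eq_Icc_image_pow hp0
  obtain rfl : I = Icc a 1 := hI.trans hIa
  have hunique : UniqueDiffOn ℝ (Icc a 1) := uniqueDiffOn_Icc (ha.trans_lt one_pos)
  exact ⟨C, R ^ p, hC, pow_pos hR p, power_substitution_general hp0
    ((convex_Icc a 1).starConvex ⟨ha, zero_le_one⟩) hunique hunique himage hf hF⟩
end

section
/- Let M' = (M'_n) be a log-convex sequence of positive reals with M'_0 = 1, m_k = M'_{k+1}/M'_k, and suppose m_k → ∞. Define F(ξ) = ∑_{k≥0} (M'_k/(2m_k)^k)·cos(2 m_k ξ). Then F is a well-defined smooth function on ℝ and |F^{(2n)}(0)| ≥ M'_{2n} for all n ∈ ℕ. -/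
/-!
Write `m_k = M (k + 1) / M k`. Log-convexity says that `m` is monotone, so for fixed `k` the
sequence `j ↦ M j / m_k ^ j` decreases up to `j = k` and increases from there on. Its minimum is
therefore attained at `j = k`, which gives `M k / (2 m_k) ^ k * (2 m_k) ^ j ≤ 2 ^ j M j / 2 ^ k`:
each termwise derived series is dominated by a geometric one. At `0` the terms of the derivative of
order `2n` all carry the same sign `(-1) ^ n`, so nothing cancels and the term `k = 2n`, of absolute
value `M (2n)`, is a lower bound.
-/

section LogConvexSequence

variable {K : Type*} [Field K]

/-- The quotients `m_k = M (k + 1) / M k` of consecutive terms of a weight sequence. -/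
def growthRatio (M : ℕ → K) (k : ℕ) : K := M (k + 1) / M k

/-- The coefficients `M k / (2 m_k) ^ k` of Bang's function. -/
def bangCoeff (M : ℕ → K) (k : ℕ) : K := M k / (2 * growthRatio M k) ^ k

variable [LinearOrder K] [IsStrictOrderedRing K] {M : ℕ → K}

lemma growthRatio_pos (hpos : ∀ n, 0 < M n) (k : ℕ) : 0 < growthRatio M k :=
  div_pos (hpos (k + 1)) (hpos k)

lemma two_mul_growthRatio_pos (hpos : ∀ n, 0 < M n) (k : ℕ) : 0 < 2 * growthRatio M k :=
  mul_pos two_pos (growthRatio_pos hpos k)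

lemma monotone_growthRatio (hpos : ∀ n, 0 < M n)
    (hlc : ∀ n, M (n + 1) ^ 2 ≤ M n * M (n + 2)) : Monotone (growthRatio M) := by
  refine monotone_nat_of_le_succ fun n ↦ ?_
  rw [growthRatio, growthRatio, div_le_div_iff₀ (hpos n) (hpos (n + 1)), ← sq, mul_comm]
  exact hlc n

lemma div_pow_succ_le_div_pow_iff {r : K} {j : ℕ} (hM : 0 < M j) (hr : 0 < r) :
    M (j + 1) / r ^ (j + 1) ≤ M j / r ^ j ↔ growthRatio M j ≤ r := by
  rw [pow_succ', ← div_div, div_le_div_iff_of_pos_right (pow_pos hr j), div_le_iff₀ hr,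
    growthRatio, div_le_iff₀ hM, mul_comm]

lemma div_pow_le_div_pow_succ_iff {r : K} {j : ℕ} (hM : 0 < M j) (hr : 0 < r) :
    M j / r ^ j ≤ M (j + 1) / r ^ (j + 1) ↔ r ≤ growthRatio M j := by
  rw [pow_succ', ← div_div, div_le_div_iff_of_pos_right (pow_pos hr j), le_div_iff₀ hr,
    growthRatio, le_div_iff₀ hM, mul_comm]

lemma div_growthRatio_pow_self_le (hpos : ∀ n, 0 < M n) (hmono : Monotone (growthRatio M))
    (j k : ℕ) : M k / growthRatio M k ^ k ≤ M j / growthRatio M k ^ j := by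
  have hr : 0 < growthRatio M k := growthRatio_pos hpos k
  rcases le_total j k with hjk | hkj
  · have hanti : AntitoneOn (fun i ↦ M i / growthRatio M k ^ i) (Set.Iic k) :=
      antitoneOn_of_add_one_le Set.ordConnected_Iic fun i _ hi _ ↦
        (div_pow_succ_le_div_pow_iff (hpos i) hr).2 (hmono hi)
    exact hanti hjk Set.self_mem_Iic hjk
  · have hmonoOn : MonotoneOn (fun i ↦ M i / growthRatio M k ^ i) (Set.Ici k) :=
      monotoneOn_nat_Ici_of_le_succ fun i hi ↦
        (div_pow_le_div_pow_succ_iff (hpos i) hr).2 (hmono hi)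
    exact hmonoOn Set.self_mem_Ici hkj hkj

lemma bangCoeff_pos (hpos : ∀ n, 0 < M n) (k : ℕ) : 0 < bangCoeff M k :=
  div_pos (hpos k) (pow_pos (two_mul_growthRatio_pos hpos k) k)

lemma bangCoeff_mul_pow_self (hpos : ∀ n, 0 < M n) (k : ℕ) :
    bangCoeff M k * (2 * growthRatio M k) ^ k = M k :=
  div_mul_cancel₀ _ (pow_pos (two_mul_growthRatio_pos hpos k) k).ne'

lemma bangCoeff_mul_pow_le (hpos : ∀ n, 0 < M n) (hmono : Monotone (growthRatio M)) (j k : ℕ) :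
    bangCoeff M k * (2 * growthRatio M k) ^ j ≤ 2 ^ j * M j * (1 / 2) ^ k := by
  have hr : 0 < growthRatio M k := growthRatio_pos hpos k
  calc bangCoeff M k * (2 * growthRatio M k) ^ j
      = 2 ^ j * (M k / growthRatio M k ^ k * growthRatio M k ^ j) * (1 / 2) ^ k := by
        simp only [bangCoeff, mul_pow, one_div, inv_pow]
        field_simp
    _ ≤ 2 ^ j * M j * (1 / 2) ^ k := by
        gcongr
        exact (le_div_iff₀ (pow_pos hr j)).1 (div_growthRatio_pow_self_le hpos hmono j k)

end LogConvexSequence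

lemma summable_bangCoeff_mul_pow {M : ℕ → ℝ} (hpos : ∀ n, 0 < M n)
    (hmono : Monotone (growthRatio M)) (j : ℕ) :
    Summable fun k ↦ bangCoeff M k * (2 * growthRatio M k) ^ j :=
  .of_nonneg_of_le
    (fun k ↦ (mul_pos (bangCoeff_pos hpos k) (pow_pos (two_mul_growthRatio_pos hpos k) j)).le)
    (bangCoeff_mul_pow_le hpos hmono j) (summable_geometric_two.mul_left _)

lemma iteratedDeriv_tsum {ι 𝕜 E : Type*} [NontriviallyNormedField 𝕜] [IsRCLikeNormedField 𝕜]
    [NormedAddCommGroup E] [NormedSpace 𝕜 E] [CompleteSpace E] {f : ι → 𝕜 → E} {v : ℕ → ι → ℝ}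
    {n : ℕ} (hf : ∀ i, ContDiff 𝕜 n (f i)) (hv : ∀ j ≤ n, Summable (v j))
    (hfv : ∀ j ≤ n, ∀ i x, ‖iteratedDeriv j (f i) x‖ ≤ v j i) (x : 𝕜) :
    iteratedDeriv n (fun y ↦ ∑' i, f i y) x = ∑' i, iteratedDeriv n (f i) x := by
  have hbound (j : ℕ) (i : ι) (y : 𝕜) (hj : (j : ℕ∞) ≤ n) :
      ‖iteratedFDeriv 𝕜 j (f i) y‖ ≤ v j i := by
    rw [norm_iteratedFDeriv_eq_norm_iteratedDeriv]
    exact hfv j (mod_cast hj) i y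
  have hsum : Summable fun i ↦ iteratedFDeriv 𝕜 n (f i) x :=
    .of_norm_bounded (hv n le_rfl) fun i ↦ hbound n i x le_rfl
  simp only [iteratedDeriv_eq_iteratedFDeriv]
  rw [iteratedFDeriv_tsum_apply (N := n) hf (fun j hj ↦ hv j (mod_cast hj)) hbound le_rfl,
    ContinuousMultilinearMap.tsum_eval hsum]

section CosSeries

variable {ι : Type*} {a c : ι → ℝ}

/-- The cosine series with coefficients `a` and arbitrary real frequencies `c`; Bang's function is
the case `a = bangCoeff M`, `c = 2 * growthRatio M`. As an unconditional sum it takes the junk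
value `0` where it does not converge absolutely. -/
noncomputable def cosSeries (a c : ι → ℝ) (x : ℝ) : ℝ := ∑' i, a i * Real.cos (c i * x)

lemma contDiff_const_mul_cos_const_mul {n : WithTop ℕ∞} (a c : ℝ) :
    ContDiff ℝ n fun x ↦ a * Real.cos (c * x) := by
  fun_prop

lemma iteratedDeriv_const_mul_cos_const_mul (j : ℕ) (a c x : ℝ) :
    iteratedDeriv j (fun y ↦ a * Real.cos (c * y)) x =
      a * c ^ j * iteratedDeriv j Real.cos (c * x) := by
  rw [iteratedDeriv_const_mul_field, iteratedDeriv_comp_const_mul Real.contDiff_cos, mul_assoc]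

lemma norm_iteratedDeriv_const_mul_cos_const_mul_le (j : ℕ) (a c x : ℝ) :
    ‖iteratedDeriv j (fun y ↦ a * Real.cos (c * y)) x‖ ≤ |a * c ^ j| := by
  rw [iteratedDeriv_const_mul_cos_const_mul, Real.norm_eq_abs, abs_mul]
  exact mul_le_of_le_one_right (abs_nonneg _) (Real.abs_iteratedDeriv_cos_le_one j _)

lemma contDiff_cosSeries {N : ℕ∞}
    (hsum : ∀ j : ℕ, (j : ℕ∞) ≤ N → Summable fun i ↦ a i * c i ^ j) :
    ContDiff ℝ N (cosSeries a c) := by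
  refine contDiff_tsum (fun i ↦ contDiff_const_mul_cos_const_mul (a i) (c i))
    (fun j hj ↦ (hsum j hj).abs) fun j i x _ ↦ ?_
  rw [norm_iteratedFDeriv_eq_norm_iteratedDeriv]
  exact norm_iteratedDeriv_const_mul_cos_const_mul_le j (a i) (c i) x

lemma iteratedDeriv_cosSeries {n : ℕ} (hsum : ∀ j ≤ n, Summable fun i ↦ a i * c i ^ j) (x : ℝ) :
    iteratedDeriv n (cosSeries a c) x =
      ∑' i, a i * c i ^ n * iteratedDeriv n Real.cos (c i * x) := by
  simp only [← iteratedDeriv_const_mul_cos_const_mul]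
  exact iteratedDeriv_tsum (fun i ↦ contDiff_const_mul_cos_const_mul (a i) (c i))
    (fun j hj ↦ (hsum j hj).abs)
    (fun j _ i ↦ norm_iteratedDeriv_const_mul_cos_const_mul_le j (a i) (c i)) x

lemma iteratedDeriv_even_cosSeries_zero {n : ℕ}
    (hsum : ∀ j ≤ 2 * n, Summable fun i ↦ a i * c i ^ j) :
    iteratedDeriv (2 * n) (cosSeries a c) 0 = (-1) ^ n * ∑' i, a i * c i ^ (2 * n) := by
  have hcos : iteratedDeriv (2 * n) Real.cos 0 = (-1) ^ n := by
    simp [Real.iteratedDeriv_even_cos]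
  rw [iteratedDeriv_cosSeries hsum]
  simp only [mul_zero, hcos, tsum_mul_right]
  exact mul_comm _ _

lemma mul_pow_le_abs_iteratedDeriv_even_cosSeries_zero {n : ℕ} (ha : ∀ i, 0 ≤ a i)
    (hsum : ∀ j ≤ 2 * n, Summable fun i ↦ a i * c i ^ j) (i : ι) :
    a i * c i ^ (2 * n) ≤ |iteratedDeriv (2 * n) (cosSeries a c) 0| := by
  have hnonneg (k : ι) : 0 ≤ a k * c k ^ (2 * n) :=
    mul_nonneg (ha k) ((even_two_mul n).pow_nonneg (c k))
  rw [iteratedDeriv_even_cosSeries_zero hsum, abs_mul, abs_neg_one_pow, one_mul]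
  exact ((hsum _ le_rfl).le_tsum i fun k _ ↦ hnonneg k).trans (le_abs_self _)

end CosSeries

theorem bang_function_general (M : ℕ → ℝ) (hpos : ∀ n, 0 < M n)
    (hlc : ∀ n : ℕ, 1 ≤ n → (M n) ^ 2 ≤ M (n - 1) * M (n + 1))
    (F : ℝ → ℝ)
    (hF : F = fun ξ => ∑' k : ℕ,
        (M k / (2 * (M (k + 1) / M k)) ^ k) * Real.cos (2 * (M (k + 1) / M k) * ξ)) :
    ContDiff ℝ (⊤ : ℕ∞) F ∧ ∀ n : ℕ, M (2 * n) ≤ |iteratedDeriv (2 * n) F 0| := by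
  have hF' : F = cosSeries (bangCoeff M) fun k ↦ 2 * growthRatio M k := hF
  have hmono : Monotone (growthRatio M) :=
    monotone_growthRatio hpos fun n ↦ hlc (n + 1) (Nat.le_add_left 1 n)
  have hsum := summable_bangCoeff_mul_pow hpos hmono
  subst hF'
  refine ⟨contDiff_cosSeries fun j _ ↦ hsum j, fun n ↦ ?_⟩
  calc M (2 * n) = bangCoeff M (2 * n) * (2 * growthRatio M (2 * n)) ^ (2 * n) :=
        (bangCoeff_mul_pow_self hpos (2 * n)).symm
    _ ≤ |iteratedDeriv (2 * n) (cosSeries (bangCoeff M) fun k ↦ 2 * growthRatio M k) 0| :=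
        mul_pow_le_abs_iteratedDeriv_even_cosSeries_zero (fun k ↦ (bangCoeff_pos hpos k).le)
          (fun j _ ↦ hsum j) (2 * n)

theorem bang_function (M : ℕ → ℝ) (hpos : ∀ n, 0 < M n) (h0 : M 0 = 1)
    (hlc : ∀ n : ℕ, 1 ≤ n → (M n) ^ 2 ≤ M (n - 1) * M (n + 1))
    (htend : Filter.Tendsto (fun k => M (k + 1) / M k) Filter.atTop Filter.atTop)
    (F : ℝ → ℝ)
    (hF : F = fun ξ => ∑' k : ℕ,
        (M k / (2 * (M (k + 1) / M k)) ^ k) * Real.cos (2 * (M (k + 1) / M k) * ξ)) :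
    ContDiff ℝ (⊤ : ℕ∞) F ∧ ∀ n : ℕ, M (2 * n) ≤ |iteratedDeriv (2 * n) F 0| :=
  bang_function_general M hpos hlc F hF
end
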